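/- Let X be a connected, locally compact, locally connected Hausdorff space, and let a group G act on X by homeomorphisms (each element acts as a homeomorphism of X) such that for every compact set C ⊆ X there exists g ∈ G with (g • C) ∩ C = ∅. If n ≥ 3 and there is a compact set C ⊆ X such that X \ C has at least n distinct unbounded connected components, then there is a compact set D ⊆ X such that X \ D has at least n + 1 distinct unbounded connected components. (Consequently such a space X has 0, 1, 2 or infinitely many ends.) -/

import Mathlib

open Pointwise

/-! Write `e(C)` for the number of unbounded components of `X \ C`. Two facts drive the argument.

* Enlarging `C` to a larger compact set `K` cannot lower `e`: only finitely many components of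
  `X \ K` leave a given relatively compact neighbourhood of `K`, so an unbounded component of
  `X \ C` would be bounded if all the components of `X \ K` inside it were.
* If `K` and `L` are disjoint and connected, then `L` lies in a single component of `X \ K`; all
  the other components of `X \ K` are still components of `X \ (K ∪ L)`. The same holds with `K`
  and `L` exchanged, and no set is a component of both `X \ K` and `X \ L`.
  Hence `e(K) + e(L) ≤ e(K ∪ L) + 2`.

Enlarge `C` to a compact connected `K` and let `L` be a translate of `K` disjoint from it. Then
`2 e(C) ≤ e(K ∪ L) + 2`, and `2n - 2 ≥ n + 1` as soon as `n ≥ 3`.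
-/

open Set Topology

section

variable {X Y : Type*} [TopologicalSpace X] [TopologicalSpace Y] {A B C K L P S T U V : Set X}

section Components

/-- The connected components of the subspace `S` of `X`, as subsets of `X`. Only base points in `S`
are allowed, because `connectedComponentIn S x = ∅` for `x ∉ S`. -/
def componentsIn (S : Set X) : Set (Set X) :=
  {A | ∃ x ∈ S, A = connectedComponentIn S x}

theorem exists_mem_componentsIn_of_mem {x : X} (hx : x ∈ S) : ∃ A ∈ componentsIn S, x ∈ A :=
  ⟨_, ⟨x, hx, rfl⟩, mem_connectedComponentIn hx⟩

theorem isConnected_of_mem_componentsIn (hA : A ∈ componentsIn S) : IsConnected A := by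
  obtain ⟨x, hx, rfl⟩ := hA
  exact isConnected_connectedComponentIn_iff.2 hx

theorem subset_of_mem_componentsIn (hA : A ∈ componentsIn S) : A ⊆ S := by
  obtain ⟨x, -, rfl⟩ := hA
  exact connectedComponentIn_subset S x

theorem isOpen_of_mem_componentsIn [LocallyConnectedSpace X] (hS : IsOpen S)
    (hA : A ∈ componentsIn S) : IsOpen A := by
  obtain ⟨x, -, rfl⟩ := hA
  exact hS.connectedComponentIn

theorem subset_of_isPreconnected_of_mem_componentsIn (hP : IsPreconnected P) (hPS : P ⊆ S)
    (hA : A ∈ componentsIn S) (hAP : (A ∩ P).Nonempty) : P ⊆ A := by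
  obtain ⟨x, -, rfl⟩ := hA
  obtain ⟨y, hyA, hyP⟩ := hAP
  rw [connectedComponentIn_eq hyA]
  exact hP.subset_connectedComponentIn hyP hPS

theorem eq_of_mem_componentsIn (hA : A ∈ componentsIn S) (hB : B ∈ componentsIn S)
    (hAB : (A ∩ B).Nonempty) : A = B := by
  refine Subset.antisymm ?_ ?_
  · exact subset_of_isPreconnected_of_mem_componentsIn (isConnected_of_mem_componentsIn hA).2
      (subset_of_mem_componentsIn hA) hB (inter_comm A B ▸ hAB)
  · exact subset_of_isPreconnected_of_mem_componentsIn (isConnected_of_mem_componentsIn hB).2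
      (subset_of_mem_componentsIn hB) hA hAB

theorem closure_inter_subset_of_mem_componentsIn (hA : A ∈ componentsIn S) :
    closure A ∩ S ⊆ A := by
  have hAcon := isConnected_of_mem_componentsIn hA
  have hAsub : A ⊆ closure A ∩ S := subset_inter subset_closure (subset_of_mem_componentsIn hA)
  refine subset_of_isPreconnected_of_mem_componentsIn
    (hAcon.2.subset_closure hAsub inter_subset_left) inter_subset_right hA ?_
  rw [inter_eq_self_of_subset_left hAsub]
  exact hAcon.1

theorem mem_componentsIn_of_subset_of_subset (hA : A ∈ componentsIn S) (hAT : A ⊆ T)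
    (hTS : T ⊆ S) : A ∈ componentsIn T := by
  obtain ⟨x, hx, rfl⟩ := hA
  have hxA := mem_connectedComponentIn hx
  exact ⟨x, hAT hxA, Subset.antisymm
    (isPreconnected_connectedComponentIn.subset_connectedComponentIn hxA hAT)
    (connectedComponentIn_mono x hTS)⟩

theorem image_mem_componentsIn (φ : X ≃ₜ Y) (hA : A ∈ componentsIn S) :
    φ '' A ∈ componentsIn (φ '' S) := by
  obtain ⟨x, hx, rfl⟩ := hA
  exact ⟨φ x, mem_image_of_mem φ hx, φ.image_connectedComponentIn hx⟩

theorem finite_componentsIn_inter_nonempty [LocallyConnectedSpace X] (hS : IsOpen S)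
    (hK : IsCompact K) (hKS : K ⊆ S) : {A ∈ componentsIn S | (A ∩ K).Nonempty}.Finite := by
  obtain ⟨𝒜, h𝒜S, h𝒜fin, hK𝒜⟩ := hK.elim_finite_subcover_image (b := componentsIn S) (c := id)
    (fun A hA => isOpen_of_mem_componentsIn hS hA)
    (fun x hx => mem_iUnion₂.2 <| by simpa using exists_mem_componentsIn_of_mem (hKS hx))
  refine h𝒜fin.subset fun A ⟨hA, x, hxA, hxK⟩ => ?_
  obtain ⟨B, hB, hxB⟩ := mem_iUnion₂.1 (hK𝒜 hxK)
  exact eq_of_mem_componentsIn hA (h𝒜S hB) ⟨x, hxA, hxB⟩ ▸ hB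

theorem subsingleton_componentsIn_not_disjoint (hP : IsConnected P) (hPS : P ⊆ S) :
    {A ∈ componentsIn S | ¬ Disjoint A P}.Subsingleton := by
  have hsup : ∀ A ∈ {A ∈ componentsIn S | ¬ Disjoint A P}, P ⊆ A := fun A hA =>
    subset_of_isPreconnected_of_mem_componentsIn hP.2 hPS hA.1
      (not_disjoint_iff_nonempty_inter.1 hA.2)
  intro A hA B hB
  exact eq_of_mem_componentsIn hA.1 hB.1 (hP.1.mono (subset_inter (hsup A hA) (hsup B hB)))

end Components

section PreconnectedSpace

variable [PreconnectedSpace X] [LocallyConnectedSpace X]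

theorem eq_univ_of_mem_componentsIn_of_isClosed (hS : IsOpen S) (hA : A ∈ componentsIn S)
    (hAcl : IsClosed A) : A = univ :=
  IsClopen.eq_univ ⟨hAcl, isOpen_of_mem_componentsIn hS hA⟩ (isConnected_of_mem_componentsIn hA).1

theorem inter_nonempty_of_mem_componentsIn_of_compl_subset (hS : IsOpen S)
    (hA : A ∈ componentsIn S) (hAne : A ≠ univ) (hV : IsOpen V) (hSV : Sᶜ ⊆ V) :
    (A ∩ V).Nonempty := by
  by_contra! hAV
  have hclV : closure A ⊆ Vᶜ :=
    closure_minimal (disjoint_iff_inter_eq_empty.2 hAV).subset_compl_right hV.isClosed_compl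
  have hclS : closure A ⊆ S := hclV.trans (compl_subset_comm.1 hSV)
  refine hAne (eq_univ_of_mem_componentsIn_of_isClosed hS hA (isClosed_of_closure_subset ?_))
  exact fun x hx => closure_inter_subset_of_mem_componentsIn hA ⟨hx, hclS hx⟩

theorem inter_frontier_nonempty_of_mem_componentsIn (hS : IsOpen S) (hA : A ∈ componentsIn S)
    (hAne : A ≠ univ) (hV : IsOpen V) (hSV : Sᶜ ⊆ V) (hAV : ¬ A ⊆ V) :
    (A ∩ frontier V).Nonempty := by
  by_contra! hfr
  refine hAV ((isConnected_of_mem_componentsIn hA).2.subset_of_closure_inter_subset hV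
    (inter_nonempty_of_mem_componentsIn_of_compl_subset hS hA hAne hV hSV) ?_)
  rintro x ⟨hxV, hxA⟩
  by_contra hx
  exact hfr.le ⟨hxA, hV.frontier_eq ▸ ⟨hxV, hx⟩⟩

theorem finite_componentsIn_not_subset (hS : IsOpen S) (hV : IsOpen V) (hSV : Sᶜ ⊆ V)
    (hVc : IsCompact (closure V)) : {A ∈ componentsIn S | ¬ A ⊆ V}.Finite := by
  have hfrS : frontier V ⊆ S := by
    rw [hV.frontier_eq]
    exact fun x hx => not_not.1 fun hxS => hx.2 (hSV hxS)
  have hfin := finite_componentsIn_inter_nonempty hS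
    (hVc.of_isClosed_subset isClosed_frontier frontier_subset_closure) hfrS
  refine (hfin.insert univ).subset fun A ⟨hA, hAV⟩ => ?_
  rw [mem_insert_iff, or_iff_not_imp_left]
  exact fun hAne => ⟨hA, inter_frontier_nonempty_of_mem_componentsIn hS hA hAne hV hSV hAV⟩

theorem disjoint_componentsIn_of_union_eq_univ (hS : IsOpen S) (hSne : S ≠ univ)
    (hST : S ∪ T = univ) : Disjoint (componentsIn S) (componentsIn T) := by
  refine disjoint_left.2 fun A hAS hAT => hSne ?_
  have hAcl : IsClosed A := isClosed_of_closure_subset fun x hx => by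
    rcases hST.ge (mem_univ x) with hxS | hxT
    · exact closure_inter_subset_of_mem_componentsIn hAS ⟨hx, hxS⟩
    · exact closure_inter_subset_of_mem_componentsIn hAT ⟨hx, hxT⟩
  rw [← univ_subset_iff, ← eq_univ_of_mem_componentsIn_of_isClosed hS hAS hAcl]
  exact subset_of_mem_componentsIn hAS

end PreconnectedSpace

section UnboundedComponents

/-- The connected components of the subspace `S` whose closure in `X` is not compact. For `S = Cᶜ`
with `C` compact, their number is a lower bound for the number of ends of `X`. -/
def unboundedComponents (S : Set X) : Set (Set X) :=
  {A | A ∈ componentsIn S ∧ ¬ IsCompact (closure A)}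

theorem mem_unboundedComponents_inter_of_subset (hA : A ∈ unboundedComponents S) (hAT : A ⊆ T) :
    A ∈ unboundedComponents (S ∩ T) :=
  ⟨mem_componentsIn_of_subset_of_subset hA.1
    (subset_inter (subset_of_mem_componentsIn hA.1) hAT) inter_subset_left, hA.2⟩

theorem image_mem_unboundedComponents (φ : X ≃ₜ Y) (hA : A ∈ unboundedComponents S) :
    φ '' A ∈ unboundedComponents (φ '' S) := by
  refine ⟨image_mem_componentsIn φ hA.1, fun hc => hA.2 ?_⟩
  rwa [← φ.image_closure, φ.isCompact_image] at hc

theorem encard_unboundedComponents_image (φ : X ≃ₜ Y) :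
    (unboundedComponents (φ '' S)).encard = (unboundedComponents S).encard := by
  refine le_antisymm ?_ ?_
  · refine encard_le_encard_of_injOn (f := image φ.symm) (fun A hA => ?_)
      φ.symm.injective.image_injective.injOn
    simpa only [← image_comp, φ.symm_comp_self, image_id] using
      image_mem_unboundedComponents φ.symm hA
  · exact encard_le_encard_of_injOn (f := image φ)
      (fun A hA => image_mem_unboundedComponents φ hA) φ.injective.image_injective.injOn

theorem encard_unboundedComponents_le_disjoint_add_one (hP : IsConnected P) (hPS : P ⊆ S) :
    (unboundedComponents S).encard ≤ {A ∈ unboundedComponents S | Disjoint A P}.encard + 1 := by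
  have hsplit : unboundedComponents S ⊆ {A ∈ unboundedComponents S | Disjoint A P} ∪
      {A ∈ componentsIn S | ¬ Disjoint A P} := fun A hA =>
    (em (Disjoint A P)).imp (fun h => ⟨hA, h⟩) (fun h => ⟨hA.1, h⟩)
  grw [hsplit, encard_union_le,
    encard_le_one_iff_subsingleton.2 (subsingleton_componentsIn_not_disjoint hP hPS)]

theorem encard_unboundedComponents_compl_add_le [PreconnectedSpace X] [LocallyConnectedSpace X]
    (hKcl : IsClosed K) (hK : IsConnected K) (hL : IsConnected L) (hKL : Disjoint K L) :
    (unboundedComponents Kᶜ).encard + (unboundedComponents Lᶜ).encard ≤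
      (unboundedComponents (K ∪ L)ᶜ).encard + 2 := by
  let 𝒜 := {A ∈ unboundedComponents Kᶜ | Disjoint A L}
  let ℬ := {A ∈ unboundedComponents Lᶜ | Disjoint A K}
  have h𝒜 : 𝒜 ⊆ unboundedComponents (K ∪ L)ᶜ := fun A ⟨hA, hAL⟩ => by
    rw [compl_union]
    exact mem_unboundedComponents_inter_of_subset hA hAL.subset_compl_right
  have hℬ : ℬ ⊆ unboundedComponents (K ∪ L)ᶜ := fun A ⟨hA, hAK⟩ => by
    rw [union_comm, compl_union]
    exact mem_unboundedComponents_inter_of_subset hA hAK.subset_compl_right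
  have hdisj : Disjoint 𝒜 ℬ := by
    have hunion : Kᶜ ∪ Lᶜ = univ := by rw [← compl_inter, hKL.inter_eq, compl_empty]
    have hKne : Kᶜ ≠ univ := compl_ne_univ.2 hK.1
    exact (disjoint_componentsIn_of_union_eq_univ hKcl.isOpen_compl hKne hunion).mono
      (fun A hA => hA.1.1) (fun A hA => hA.1.1)
  calc (unboundedComponents Kᶜ).encard + (unboundedComponents Lᶜ).encard
      ≤ (𝒜.encard + 1) + (ℬ.encard + 1) := add_le_add
        (encard_unboundedComponents_le_disjoint_add_one hL hKL.subset_compl_left)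
        (encard_unboundedComponents_le_disjoint_add_one hK hKL.subset_compl_right)
    _ = (𝒜 ∪ ℬ).encard + 2 := by
        rw [encard_union_eq hdisj, add_add_add_comm, one_add_one_eq_two]
    _ ≤ (unboundedComponents (K ∪ L)ᶜ).encard + 2 := by grw [union_subset h𝒜 hℬ]

variable [PreconnectedSpace X] [LocallyConnectedSpace X] [WeaklyLocallyCompactSpace X] [R1Space X]

theorem exists_mem_unboundedComponents_subset (hT : IsOpen T) (hTc : IsCompact Tᶜ) (hTS : T ⊆ S)
    (hU : U ∈ unboundedComponents S) : ∃ A ∈ unboundedComponents T, A ⊆ U := by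
  by_contra! hbdd
  obtain ⟨V, hV, hTV, hVc⟩ := exists_isOpen_superset_and_isCompact_closure hTc
  let 𝒜 := {A ∈ componentsIn T | ¬ A ⊆ V ∧ A ⊆ U}
  have h𝒜fin : 𝒜.Finite :=
    (finite_componentsIn_not_subset hT hV hTV hVc).subset fun A hA => ⟨hA.1, hA.2.1⟩
  have hcompact : IsCompact (closure V ∪ ⋃ A ∈ 𝒜, closure A) :=
    hVc.union <| h𝒜fin.isCompact_biUnion fun A hA =>
      not_not.1 fun hA' => hbdd A ⟨hA.1, hA'⟩ hA.2.2
  refine hU.2 (hcompact.closure_of_subset fun x hxU => ?_)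
  by_cases hxV : x ∈ V
  · exact Or.inl (subset_closure hxV)
  obtain ⟨A, hA, hxA⟩ := exists_mem_componentsIn_of_mem (not_not.1 fun hxT => hxV (hTV hxT))
  have hAU : A ⊆ U := subset_of_isPreconnected_of_mem_componentsIn
    (isConnected_of_mem_componentsIn hA).2 ((subset_of_mem_componentsIn hA).trans hTS) hU.1
    ⟨x, hxU, hxA⟩
  exact Or.inr (mem_biUnion ⟨hA, fun hAV => hxV (hAV hxA), hAU⟩ (subset_closure hxA))

theorem encard_unboundedComponents_anti (hT : IsOpen T) (hTc : IsCompact Tᶜ) (hTS : T ⊆ S) :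
    (unboundedComponents S).encard ≤ (unboundedComponents T).encard := by
  choose! F hF hFsub using fun U (hU : U ∈ unboundedComponents S) =>
    exists_mem_unboundedComponents_subset hT hTc hTS hU
  refine encard_le_encard_of_injOn hF fun U hU V hV hUV => eq_of_mem_componentsIn hU.1 hV.1 ?_
  exact (isConnected_of_mem_componentsIn (hF U hU).1).1.mono
    (subset_inter (hFsub U hU) (hUV ▸ hFsub V hV))

end UnboundedComponents

section ConnectedSuperset

variable [LocallyConnectedSpace X] [WeaklyLocallyCompactSpace X] [R1Space X]

theorem exists_mem_nhds_isCompact_isConnected (x : X) :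
    ∃ N ∈ 𝓝 x, IsCompact N ∧ IsConnected N := by
  obtain ⟨M, hM, hxM⟩ := exists_compact_mem_nhds x
  exact ⟨closure (connectedComponentIn M x),
    Filter.mem_of_superset (connectedComponentIn_mem_nhds hxM) subset_closure,
    hM.closure_of_subset (connectedComponentIn_subset M x),
    (isConnected_connectedComponentIn_iff.2 (mem_of_mem_nhds hxM)).closure⟩

theorem exists_isCompact_isConnected_mem_mem [PreconnectedSpace X] (x y : X) :
    ∃ K, IsCompact K ∧ IsConnected K ∧ x ∈ K ∧ y ∈ K := by
  let Linked (x y : X) : Prop := ∃ K, IsCompact K ∧ IsConnected K ∧ x ∈ K ∧ y ∈ K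
  have hsymm : Std.Symm Linked := ⟨fun x y ⟨K, hK, hKcon, hx, hy⟩ => ⟨K, hK, hKcon, hy, hx⟩⟩
  have htrans : IsTrans X Linked := ⟨fun x y z ⟨K, hK, hKcon, hx, hy⟩ ⟨L, hL, hLcon, hy', hz⟩ =>
    ⟨K ∪ L, hK.union hL, hKcon.union ⟨y, hy, hy'⟩ hLcon, Or.inl hx, Or.inr hz⟩⟩
  refine PreconnectedSpace.induction₂ Linked (fun x => ?_) htrans x y
  obtain ⟨N, hxN, hN, hNcon⟩ := exists_mem_nhds_isCompact_isConnected x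
  filter_upwards [hxN] with y hy
  exact ⟨N, hN, hNcon, mem_of_mem_nhds hxN, hy⟩

theorem exists_isCompact_isConnected_superset [ConnectedSpace X] (hC : IsCompact C) :
    ∃ K, IsCompact K ∧ IsConnected K ∧ C ⊆ K := by
  obtain ⟨x₀⟩ : Nonempty X := inferInstance
  let Enclosed (B : Set X) : Prop := ∃ K, IsCompact K ∧ IsConnected K ∧ x₀ ∈ K ∧ B ⊆ K
  have hempty : Enclosed ∅ :=
    ⟨{x₀}, isCompact_singleton, isConnected_singleton, rfl, empty_subset _⟩
  have hmono ⦃A B : Set X⦄ (hAB : A ⊆ B) : Enclosed B → Enclosed A :=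
    fun ⟨K, hK, hKcon, hx₀, hBK⟩ => ⟨K, hK, hKcon, hx₀, hAB.trans hBK⟩
  have hunion ⦃A B : Set X⦄ : Enclosed A → Enclosed B → Enclosed (A ∪ B) :=
    fun ⟨K, hK, hKcon, hxK, hAK⟩ ⟨L, hL, hLcon, hxL, hBL⟩ =>
      ⟨K ∪ L, hK.union hL, hKcon.union ⟨x₀, hxK, hxL⟩ hLcon, Or.inl hxK,
        union_subset_union hAK hBL⟩
  have hnhds (x : X) : ∃ N ∈ 𝓝 x, Enclosed N := by
    obtain ⟨N, hxN, hN, hNcon⟩ := exists_mem_nhds_isCompact_isConnected x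
    obtain ⟨K, hK, hKcon, hx₀K, hxK⟩ := exists_isCompact_isConnected_mem_mem x₀ x
    exact ⟨N, hxN, K ∪ N, hK.union hN, hKcon.union ⟨x, hxK, mem_of_mem_nhds hxN⟩ hNcon,
      Or.inl hx₀K, subset_union_right⟩
  obtain ⟨K, hK, hKcon, -, hCK⟩ : Enclosed C :=
    hC.induction_on hempty hmono hunion fun x _ =>
      let ⟨N, hxN, hN⟩ := hnhds x
      ⟨N, mem_nhdsWithin_of_mem_nhds hxN, hN⟩
  exact ⟨K, hK, hKcon, hCK⟩

theorem exists_isCompact_two_mul_encard_unboundedComponents_compl_le [ConnectedSpace X]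
    (hmove : ∀ K : Set X, IsCompact K → ∃ φ : X ≃ₜ X, Disjoint K (φ '' K)) (hC : IsCompact C) :
    ∃ D : Set X, IsCompact D ∧
      2 * (unboundedComponents Cᶜ).encard ≤ (unboundedComponents Dᶜ).encard + 2 := by
  obtain ⟨K₀, hK₀, hK₀con, hCK₀⟩ := exists_isCompact_isConnected_superset hC
  obtain ⟨K, hK, hKcon, hKcl, hCK⟩ :
      ∃ K, IsCompact K ∧ IsConnected K ∧ IsClosed K ∧ C ⊆ K :=
    ⟨closure K₀, hK₀.closure, hK₀con.closure, isClosed_closure, hCK₀.trans subset_closure⟩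
  obtain ⟨φ, hφ⟩ := hmove K hK
  have hCK_le : (unboundedComponents Cᶜ).encard ≤ (unboundedComponents Kᶜ).encard :=
    encard_unboundedComponents_anti hKcl.isOpen_compl ((compl_compl K).symm ▸ hK)
      (compl_subset_compl.2 hCK)
  have hφK : (unboundedComponents (φ '' K)ᶜ).encard = (unboundedComponents Kᶜ).encard := by
    rw [← φ.image_compl, encard_unboundedComponents_image]
  refine ⟨K ∪ φ '' K, hK.union (hK.image φ.continuous), ?_⟩
  calc 2 * (unboundedComponents Cᶜ).encard
      ≤ (unboundedComponents Kᶜ).encard + (unboundedComponents (φ '' K)ᶜ).encard := by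
        rw [hφK, ← two_mul]
        gcongr
    _ ≤ (unboundedComponents (K ∪ φ '' K)ᶜ).encard + 2 :=
        encard_unboundedComponents_compl_add_le hKcl hKcon
          (hKcon.image φ φ.continuous.continuousOn) hφ

end ConnectedSuperset

end

theorem natCast_le_encard_iff_exists_injective {α : Type*} {s : Set α} {n : ℕ} :
    n ≤ s.encard ↔ ∃ f : Fin n → α, Function.Injective f ∧ ∀ i, f i ∈ s := by
  constructor
  · intro hn
    obtain ⟨t, hts, ht⟩ := exists_subset_encard_eq hn
    have : Finite t := finite_of_encard_eq_coe ht
    have hcard : Nat.card t = n := by rw [Nat.card_coe_set_eq, ncard_def, ht, ENat.toNat_natCast]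
    let e := (Finite.equivFinOfCardEq hcard).symm
    exact ⟨fun i => e i, Subtype.val_injective.comp e.injective, fun i => hts (e i).2⟩
  · rintro ⟨f, hf, hfs⟩
    simpa using hf.encard_range.trans (encard_le_encard (range_subset_iff.2 hfs))

theorem stmt1_general {X : Type*} [TopologicalSpace X] [ConnectedSpace X]
    [WeaklyLocallyCompactSpace X] [LocallyConnectedSpace X] [R1Space X]
    {G : Type*} [Group G] [MulAction G X] [ContinuousConstSMul G X]
    (hmove : ∀ C : Set X, IsCompact C → ∃ g : G, (g • C) ∩ C = ∅)
    {n : ℕ} (hn : 3 ≤ n) {C : Set X} (hC : IsCompact C)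
    (f : Fin n → Set X) (hfinj : Function.Injective f)
    (hf : ∀ i, (∃ x ∈ Cᶜ, f i = connectedComponentIn Cᶜ x) ∧ ¬ IsCompact (closure (f i))) :
    ∃ D : Set X, IsCompact D ∧ ∃ g : Fin (n + 1) → Set X, Function.Injective g ∧
      ∀ i, (∃ x ∈ Dᶜ, g i = connectedComponentIn Dᶜ x) ∧ ¬ IsCompact (closure (g i)) := by
  have hmove' (K : Set X) (hK : IsCompact K) : ∃ φ : X ≃ₜ X, Disjoint K (φ '' K) := by
    obtain ⟨g, hg⟩ := hmove K hK
    exact ⟨Homeomorph.smul g, (disjoint_iff_inter_eq_empty.2 hg).symm⟩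
  obtain ⟨D, hD, hCD⟩ := exists_isCompact_two_mul_encard_unboundedComponents_compl_le hmove' hC
  have hnC : n ≤ (unboundedComponents Cᶜ).encard :=
    natCast_le_encard_iff_exists_injective.2 ⟨f, hfinj, hf⟩
  have hnD : (n + 1 : ℕ) ≤ (unboundedComponents Dᶜ).encard := by
    have h : (2 * n : ℕ) ≤ (unboundedComponents Dᶜ).encard + 2 := by
      push_cast
      grw [hnC, hCD]
    cases hm : (unboundedComponents Dᶜ).encard with
    | top => exact le_top
    | coe m =>
      rw [hm] at h
      norm_cast at h ⊢
      omega
  exact ⟨D, hD, natCast_le_encard_iff_exists_injective.1 hnD⟩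

/-- Let `X` be a connected, locally compact, locally connected Hausdorff
space on which a group `G` acts by homeomorphisms, such that every compact `C ⊆ X` can be
moved off itself by some `g ∈ G`.  If `n ≥ 3` and there is a compact `C` such that `X \ C`
has at least `n` distinct unbounded components, then there is a compact `D` such that
`X \ D` has at least `n + 1` distinct unbounded components. -/
theorem stmt1 {X : Type*} [TopologicalSpace X] [ConnectedSpace X]
    [LocallyCompactSpace X] [LocallyConnectedSpace X] [T2Space X]
    {G : Type*} [Group G] [MulAction G X] [ContinuousConstSMul G X]
    (hmove : ∀ C : Set X, IsCompact C → ∃ g : G, (g • C) ∩ C = ∅)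
    {n : ℕ} (hn : 3 ≤ n) {C : Set X} (hC : IsCompact C)
    (f : Fin n → Set X) (hfinj : Function.Injective f)
    (hf : ∀ i, (∃ x ∈ Cᶜ, f i = connectedComponentIn Cᶜ x) ∧ ¬ IsCompact (closure (f i))) :
    ∃ D : Set X, IsCompact D ∧ ∃ g : Fin (n + 1) → Set X, Function.Injective g ∧
      ∀ i, (∃ x ∈ Dᶜ, g i = connectedComponentIn Dᶜ x) ∧ ¬ IsCompact (closure (g i)) :=
  stmt1_general hmove hn hC f hfinj hf
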